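/- With the setup of the context: (i) ‖ρ(ϑ)‖_H = 4·|T|, and for every τ' ∈ 𝔸_q for which there exist F', α' ∈ 𝔸_q with F∘F' = F'∘F = 1 + α'∘τ' and H̃ = F'∘G + τ', one has ‖ρ(τ')‖_H ≥ ‖ρ(ϑ)‖_H; (ii) for every such τ', moreover ‖ρ(F∘τ')‖_H ≥ ‖ρ(F∘ϑ)‖_H. -/

import Mathlib

noncomputable section

open MvPolynomial Quaternion

/-- The ring `R'_q = (ℤ/qℤ)[x,y]/⟨x^n - 1, y^n - 1⟩`. -/
abbrev Rq (q n : ℕ) : Type :=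
  MvPolynomial (Fin 2) (ZMod q) ⧸
    (Ideal.span {(X 0 : MvPolynomial (Fin 2) (ZMod q)) ^ n - 1, (X 1 : MvPolynomial (Fin 2) (ZMod q)) ^ n - 1})

/-- Evaluation `ev_{a,b} : R'_q → ℤ/qℤ` at a point `(a,b)` with `a^n = b^n = 1`. -/
def ev (q n : ℕ) (a b : ZMod q) (ha : a ^ n = 1) (hb : b ^ n = 1) :
    Rq q n →+* ZMod q :=
  Ideal.Quotient.lift _ (MvPolynomial.eval ![a, b])
    (by
      intro f hf
      rw [← RingHom.mem_ker]
      refine Ideal.span_le.mpr ?_ hf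
      rintro p hp
      rcases hp with rfl | rfl <;>
        simp [RingHom.mem_ker, ha, hb])

/-- The Lagrange interpolant `λ_{a,b} ∈ R'_q`. -/
def lag (q n : ℕ) (a b : ZMod q) : Rq q n :=
  Ideal.Quotient.mk _ (MvPolynomial.C (((n : ZMod q) ^ 2)⁻¹) *
    ∑ i ∈ Finset.range n, ∑ j ∈ Finset.range n,
      MvPolynomial.C (a⁻¹ ^ i * b⁻¹ ^ j) * (X 0 ^ i * X 1 ^ j))

/-- The set `E` of points `(a,b)` with `a^n = b^n = 1`, as a finset. -/
def Efin (q n : ℕ) [NeZero q] : Finset (ZMod q × ZMod q) :=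
  Finset.univ.filter fun p => p.1 ^ n = 1 ∧ p.2 ^ n = 1

/-- Evaluation at an arbitrary point of `(ℤ/qℤ)²` (zero outside `E`). -/
def evAt (q n : ℕ) (p : ZMod q × ZMod q) (f : Rq q n) : ZMod q :=
  if h : p.1 ^ n = 1 ∧ p.2 ^ n = 1 then ev q n p.1 p.2 h.1 h.2 f else 0

/-- Componentwise evaluation of a quaternion of `𝔸_q` at a point of `E`. -/
def qevAt (q n : ℕ) (p : ZMod q × ZMod q) (F : ℍ[Rq q n, 1, 1]) : ℍ[ZMod q, 1, 1] :=
  ⟨evAt q n p F.re, evAt q n p F.imI, evAt q n p F.imJ, evAt q n p F.imK⟩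

/-- The central (scalar) quaternion attached to `s ∈ R'_q`. -/
def cen (q n : ℕ) (s : Rq q n) : ℍ[Rq q n, 1, 1] :=
  algebraMap (Rq q n) ℍ[Rq q n, 1, 1] s

/-- A quaternion over `ℤ/qℤ` regarded as a constant quaternion of `𝔸_q`. -/
def constQ (q n : ℕ) (w : ℍ[ZMod q, 1, 1]) : ℍ[Rq q n, 1, 1] :=
  ⟨Ideal.Quotient.mk _ (MvPolynomial.C w.re), Ideal.Quotient.mk _ (MvPolynomial.C w.imI),
   Ideal.Quotient.mk _ (MvPolynomial.C w.imJ), Ideal.Quotient.mk _ (MvPolynomial.C w.imK)⟩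

/-- The Hamming weight of `ρ(F)`: the number of nonzero components, over all points of `E`,
among the four quaternion components of the evaluation of `F`. -/
def hw (q n : ℕ) [NeZero q] (F : ℍ[Rq q n, 1, 1]) : ℕ :=
  ∑ p ∈ Efin q n,
    ((if (qevAt q n p F).re ≠ 0 then 1 else 0) +
     (if (qevAt q n p F).imI ≠ 0 then 1 else 0) +
     (if (qevAt q n p F).imJ ≠ 0 then 1 else 0) +
     (if (qevAt q n p F).imK ≠ 0 then 1 else 0))

/-!
On `E` the Lagrange interpolant `λ_{a,b}` is the indicator of `(a, b)`, by orthogonality of the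
powers of roots of unity. Hence `ϑ` takes the value `q_{a,b} W`, with four nonzero components, at
`(a, b) ∈ T`, and vanishes on `E \ T`. Since `G` vanishes on `T`, every decomposition
`H̃ = F' ∘ G + τ'` forces `τ' = H̃ = ϑ` there, so `ρ(ϑ)` is the restriction of `ρ(τ')` to `T`.
Evaluation being multiplicative, `ρ(A ∘ ϑ)` is the restriction of `ρ(A ∘ τ')` for every `A`, and
restricting can only lower the Hamming weight.
-/

theorem natCast_zmod_ne_zero_of_dvd_sub_one {q n : ℕ} (hq : 1 < q) (hn : n ∣ q - 1) :
    (n : ZMod q) ≠ 0 := fun h =>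
  Nat.not_dvd_of_pos_of_lt (Nat.sub_pos_of_lt hq) (Nat.sub_one_lt_of_lt hq)
    (((ZMod.natCast_eq_zero_iff n q).mp h).trans hn)

theorem geom_sum_of_pow_eq_one {K : Type*} [DivisionRing K] [DecidableEq K] {n : ℕ} {z : K}
    (hz : z ^ n = 1) : ∑ i ∈ Finset.range n, z ^ i = if z = 1 then (n : K) else 0 := by
  split_ifs with h
  · simp [h]
  · rw [geom_sum_eq h, hz, sub_self, zero_div]

theorem mem_Efin {q n : ℕ} [NeZero q] {p : ZMod q × ZMod q} :
    p ∈ Efin q n ↔ p.1 ^ n = 1 ∧ p.2 ^ n = 1 := by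
  simp [Efin]

section Evaluation

variable {q n : ℕ} {p : ZMod q × ZMod q}

theorem evAt_eq_ev (hp : p.1 ^ n = 1 ∧ p.2 ^ n = 1) (f : Rq q n) :
    evAt q n p f = ev q n p.1 p.2 hp.1 hp.2 f :=
  dif_pos hp

theorem evAt_mk (hp : p.1 ^ n = 1 ∧ p.2 ^ n = 1) (f : MvPolynomial (Fin 2) (ZMod q)) :
    evAt q n p (Ideal.Quotient.mk _ f) = MvPolynomial.eval ![p.1, p.2] f :=
  evAt_eq_ev hp _

theorem evAt_lag_eq_mul_geom_sum (hp : p.1 ^ n = 1 ∧ p.2 ^ n = 1) (a b : ZMod q) :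
    evAt q n p (lag q n a b) = ((n : ZMod q) ^ 2)⁻¹ *
      ((∑ i ∈ Finset.range n, (a⁻¹ * p.1) ^ i) * ∑ j ∈ Finset.range n, (b⁻¹ * p.2) ^ j) := by
  rw [lag, evAt_mk hp]
  simp only [map_mul, map_sum, map_pow, eval_C, eval_X, Finset.sum_mul_sum,
    Matrix.cons_val_zero, Matrix.cons_val_one]
  congr! 3
  ring

theorem evAt_lag [Fact q.Prime] (hn : (n : ZMod q) ≠ 0) {r : ZMod q × ZMod q}
    (hp : p.1 ^ n = 1 ∧ p.2 ^ n = 1) (hr : r.1 ^ n = 1 ∧ r.2 ^ n = 1) :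
    evAt q n p (lag q n r.1 r.2) = if p = r then 1 else 0 := by
  have hn' : n ≠ 0 := by
    rintro rfl
    exact hn Nat.cast_zero
  have hr₁ : r.1 ≠ 0 := ne_zero_pow hn' (hr.1 ▸ one_ne_zero)
  have hr₂ : r.2 ≠ 0 := ne_zero_pow hn' (hr.2 ▸ one_ne_zero)
  rw [evAt_lag_eq_mul_geom_sum hp, geom_sum_of_pow_eq_one (by simp [mul_pow, hp, hr]),
    geom_sum_of_pow_eq_one (by simp [mul_pow, hp, hr]), ite_zero_mul_ite_zero, mul_ite, mul_zero,
    ← sq, inv_mul_cancel₀ (pow_ne_zero 2 hn)]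
  simp only [inv_mul_eq_one₀ hr₁, inv_mul_eq_one₀ hr₂, Prod.ext_iff, eq_comm]

theorem evAt_sum_smul_lag [Fact q.Prime] (hn : (n : ZMod q) ≠ 0)
    {T : Finset (ZMod q × ZMod q)} (hT : T ⊆ Efin q n) (c : ZMod q × ZMod q → ZMod q)
    (hp : p.1 ^ n = 1 ∧ p.2 ^ n = 1) :
    evAt q n p (∑ r ∈ T, c r • lag q n r.1 r.2) = if p ∈ T then c p else 0 := by
  have term (r) (hr : r ∈ T) : evAt q n p (c r • lag q n r.1 r.2) = if p = r then c r else 0 := by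
    rw [evAt_eq_ev hp, ZMod.map_smul, ← evAt_eq_ev hp, evAt_lag hn hp (mem_Efin.mp (hT hr)),
      smul_eq_mul, mul_ite, mul_one, mul_zero]
  rw [evAt_eq_ev hp, map_sum]
  simp only [← evAt_eq_ev hp]
  rw [Finset.sum_congr rfl term, Finset.sum_ite_eq]

/-- The evaluation `F ↦ F(a, b)` of quaternions at a point of `E`, i.e. `qevAt`, bundled as a ring
homomorphism `𝔸_q → 𝕃_q`. -/
def qevHom (hp : p.1 ^ n = 1 ∧ p.2 ^ n = 1) : ℍ[Rq q n,1,1] →+* ℍ[ZMod q,1,1] where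
  toFun := qevAt q n p
  map_one' := by ext <;> simp [qevAt, evAt_eq_ev hp]
  map_mul' A B := by ext <;> simp [qevAt, evAt_eq_ev hp]
  map_zero' := by ext <;> simp [qevAt, evAt_eq_ev hp]
  map_add' A B := by ext <;> simp [qevAt, evAt_eq_ev hp]

theorem qevAt_mul (hp : p.1 ^ n = 1 ∧ p.2 ^ n = 1) (A B : ℍ[Rq q n,1,1]) :
    qevAt q n p (A * B) = qevAt q n p A * qevAt q n p B :=
  map_mul (qevHom hp) A B

theorem qevAt_mul_add_of_qevAt_eq_zero (hp : p.1 ^ n = 1 ∧ p.2 ^ n = 1) {G : ℍ[Rq q n,1,1]}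
    (hG : qevAt q n p G = 0) (A B : ℍ[Rq q n,1,1]) : qevAt q n p (A * G + B) = qevAt q n p B :=
  calc qevAt q n p (A * G + B) = qevAt q n p (A * G) + qevAt q n p B := map_add (qevHom hp) _ _
    _ = qevAt q n p B := by rw [qevAt_mul hp, hG, mul_zero, zero_add]

theorem qevAt_constQ_mul_cen (hp : p.1 ^ n = 1 ∧ p.2 ^ n = 1) (W : ℍ[ZMod q,1,1]) (s : Rq q n) :
    qevAt q n p (constQ q n W * cen q n s) = evAt q n p s • W := by
  have hW : qevAt q n p (constQ q n W) = W := by ext <;> simp [qevAt, constQ, evAt_mk hp]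
  have hs : qevAt q n p (cen q n s) = algebraMap _ _ (evAt q n p s) := by
    ext <;> simp [qevAt, cen, evAt_eq_ev hp, QuaternionAlgebra.algebraMap_eq]
  rw [qevAt_mul hp, hW, hs, ← Algebra.commutes, ← Algebra.smul_def]

end Evaluation

section HammingWeight

variable {q n : ℕ}

theorem hw_le_hw_of_qevAt_eq [NeZero q] {A B : ℍ[Rq q n,1,1]}
    (h : ∀ p ∈ Efin q n, qevAt q n p A ≠ 0 → qevAt q n p A = qevAt q n p B) :
    hw q n A ≤ hw q n B := by
  refine Finset.sum_le_sum fun p hp => ?_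
  by_cases hA : qevAt q n p A = 0
  · simp [hA]
  · rw [h p hp hA]

theorem hw_mul_le_hw_mul_of_qevAt_eq [NeZero q] {B C : ℍ[Rq q n,1,1]} (A : ℍ[Rq q n,1,1])
    (h : ∀ p ∈ Efin q n, qevAt q n p B ≠ 0 → qevAt q n p B = qevAt q n p C) :
    hw q n (A * B) ≤ hw q n (A * C) := by
  refine hw_le_hw_of_qevAt_eq fun p hp hAB => ?_
  rw [qevAt_mul (mem_Efin.mp hp)] at hAB
  rw [qevAt_mul (mem_Efin.mp hp), qevAt_mul (mem_Efin.mp hp), h p hp (right_ne_zero_of_mul hAB)]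

theorem hw_constQ_mul_cen [Fact q.Prime] {W : ℍ[ZMod q,1,1]}
    (hW : W.re ≠ 0 ∧ W.imI ≠ 0 ∧ W.imJ ≠ 0 ∧ W.imK ≠ 0) (s : Rq q n) :
    hw q n (constQ q n W * cen q n s) = 4 * {p ∈ Efin q n | evAt q n p s ≠ 0}.card := by
  rw [hw, Finset.card_filter, Finset.mul_sum]
  refine Finset.sum_congr rfl fun p hp => ?_
  rw [qevAt_constQ_mul_cen (mem_Efin.mp hp)]
  by_cases hs : evAt q n p s = 0 <;> simp [hs, hW]

end HammingWeight

theorem stmt5_general (q n : ℕ) [Fact q.Prime] (hn : (n : ZMod q) ≠ 0)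
    (T : Finset (ZMod q × ZMod q)) (hT : T ⊆ Efin q n)
    (c : ZMod q × ZMod q → ZMod q) (hc : ∀ p ∈ T, c p ≠ 0)
    (σ : Rq q n) (hσ : σ = ∑ p ∈ T, c p • lag q n p.1 p.2)
    (W : ℍ[ZMod q,1,1]) (hW : W.re ≠ 0 ∧ W.imI ≠ 0 ∧ W.imJ ≠ 0 ∧ W.imK ≠ 0)
    (ϑ : ℍ[Rq q n,1,1]) (hϑ : ϑ = constQ q n W * cen q n σ)
    (G : ℍ[Rq q n,1,1]) (hG : ∀ p ∈ T, qevAt q n p G = 0) :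
    hw q n ϑ = 4 * T.card ∧
      ∀ Finv F' τ' : ℍ[Rq q n,1,1], Finv * G + ϑ = F' * G + τ' →
        ∀ A, hw q n (A * ϑ) ≤ hw q n (A * τ') := by
  have hσT (p) (hp : p ∈ Efin q n) : evAt q n p σ ≠ 0 ↔ p ∈ T := by
    rw [hσ, evAt_sum_smul_lag hn hT c (mem_Efin.mp hp), ite_ne_right_iff]
    exact and_iff_left_of_imp (hc p)
  constructor
  · rw [hϑ, hw_constQ_mul_cen hW, Finset.filter_congr hσT, Finset.filter_mem_eq_inter,
      Finset.inter_eq_right.mpr hT]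
  · intro Finv F' τ' hτ A
    refine hw_mul_le_hw_mul_of_qevAt_eq A fun p hp hϑp => ?_
    rw [hϑ, qevAt_constQ_mul_cen (mem_Efin.mp hp)] at hϑp
    have hGp : qevAt q n p G = 0 := hG p ((hσT p hp).mp (left_ne_zero_of_smul hϑp))
    rw [← qevAt_mul_add_of_qevAt_eq_zero (mem_Efin.mp hp) hGp Finv ϑ, hτ,
      qevAt_mul_add_of_qevAt_eq_zero (mem_Efin.mp hp) hGp]

/-- With the BQTRU setup: (i) `‖ρ(ϑ)‖_H = 4·|T|`, and every `τ'` admitting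
`F', α'` with `F∘F' = F'∘F = 1 + α'∘τ'` and `H̃ = F'∘G + τ'` satisfies
`‖ρ(τ')‖_H ≥ ‖ρ(ϑ)‖_H`; (ii) moreover `‖ρ(F∘τ')‖_H ≥ ‖ρ(F∘ϑ)‖_H` for every such `τ'`. -/
theorem stmt5 (q n : ℕ) [Fact q.Prime] (hn : n ∣ q - 1) (hnpos : 0 < n)
    (T : Finset (ZMod q × ZMod q)) (hT : T ⊆ Efin q n)
    (c : ZMod q × ZMod q → ZMod q) (hc : ∀ p ∈ T, c p ≠ 0)
    (σ : Rq q n) (hσ : σ = ∑ p ∈ T, c p • lag q n p.1 p.2)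
    (W : ℍ[ZMod q, 1, 1])
    (hW : W.re ≠ 0 ∧ W.imI ≠ 0 ∧ W.imJ ≠ 0 ∧ W.imK ≠ 0)
    (ϑ : ℍ[Rq q n, 1, 1]) (hϑ : ϑ = constQ q n W * cen q n σ)
    (F Finv α G : ℍ[Rq q n, 1, 1])
    (hFinv1 : F * Finv = 1 + α * cen q n σ)
    (hFinv2 : Finv * F = 1 + α * cen q n σ)
    (hG : ∀ p ∈ T, qevAt q n p G = 0)
    (H : ℍ[Rq q n, 1, 1]) (hH : H = Finv * G + ϑ) :
    (hw q n ϑ = 4 * T.card ∧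
      ∀ τ' F' α' : ℍ[Rq q n, 1, 1],
        F * F' = 1 + α' * τ' → F' * F = 1 + α' * τ' → H = F' * G + τ' →
        hw q n ϑ ≤ hw q n τ') ∧
    (∀ τ' F' α' : ℍ[Rq q n, 1, 1],
        F * F' = 1 + α' * τ' → F' * F = 1 + α' * τ' → H = F' * G + τ' →
        hw q n (F * ϑ) ≤ hw q n (F * τ')) := by
  obtain ⟨weight_eq, weight_le⟩ := stmt5_general q n
    (natCast_zmod_ne_zero_of_dvd_sub_one (Fact.out : q.Prime).one_lt hn)
    T hT c hc σ hσ W hW ϑ hϑ G hG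
  exact ⟨⟨weight_eq, fun τ' F' _ _ _ hτ => by
    simpa only [one_mul] using weight_le Finv F' τ' (hH ▸ hτ) 1⟩,
    fun τ' F' _ _ _ hτ => weight_le Finv F' τ' (hH ▸ hτ) F⟩
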